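/- Let 2 ≤ p < ∞. For a type S let ℓ^q(S) denote the Banach space of q-summable complex-valued functions on S; since p ≥ 2, every element of ℓ²(S) lies in ℓ^p(S). Let I₀, I₁, J₀, J₁, J₂ be types and suppose given linear maps d : ℓ^p(I₀) → ℓ^p(I₁), d'₀ : ℓ^p(J₀) → ℓ^p(J₁), d'₁ : ℓ^p(J₁) → ℓ^p(J₂), f₀ : ℓ^p(I₀) → ℓ^p(J₀), f₁ : ℓ^p(I₁) → ℓ^p(J₁), g₀ : ℓ^p(J₀) → ℓ^p(I₀), g₁ : ℓ^p(J₁) → ℓ^p(I₁), h₁ : ℓ^p(J₁) → ℓ^p(J₀), h₂ : ℓ^p(J₂) → ℓ^p(J₁), each of which maps the ℓ² subspace into the corresponding ℓ² subspace and is bounded both for the ℓ^p norms and for the ℓ² norms on these subspaces. Assume d'₁ ∘ d'₀ = 0, f₁ ∘ d = d'₀ ∘ f₀, g₁ ∘ d'₀ = d ∘ g₀, and f₁ ∘ g₁ = Id + d'₀ ∘ h₁ + h₂ ∘ d'₁ on ℓ^p(J₁). If the closure of d(ℓ²(I₀)) in ℓ²(I₁) is contained in d(ℓ^p(I₀)),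 then the closure of d'₀(ℓ²(J₀)) in ℓ²(J₁) is contained in d'₀(ℓ^p(J₀)). -/

import Mathlib

open scoped ENNReal

noncomputable section

/-- The element of `ℓ²(S)` determined by a square-summable function. -/
def mkL2 {S : Type*} (f : S → ℂ) (hf : Memℓp f 2) : lp (fun _ : S => ℂ) 2 :=
  ⟨f, hf⟩

/-- The inclusion `ℓ²(S) ⊆ ℓᵖ(S)` for `2 ≤ p`. -/
def inclL2 {S : Type*} {p : ℝ≥0∞} (hp : 2 ≤ p) (u : lp (fun _ : S => ℂ) 2) :
    lp (fun _ : S => ℂ) p :=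
  ⟨↑u, (lp.memℓp u).of_exponent_ge hp⟩

/-- A map of `ℓᵖ` spaces sends the `ℓ²` subspace into the `ℓ²` subspace. -/
def MapsL2 {S T : Type*} {p : ℝ≥0∞} [Fact (1 ≤ p)]
    (d : lp (fun _ : S => ℂ) p →L[ℂ] lp (fun _ : T => ℂ) p) : Prop :=
  ∀ u : lp (fun _ : S => ℂ) p, Memℓp (↑u) 2 → Memℓp (↑(d u)) 2

/-- A map of `ℓᵖ` spaces is bounded for the `ℓ²` norms on the `ℓ²` subspaces. -/
def BddL2 {S T : Type*} {p : ℝ≥0∞} [Fact (1 ≤ p)]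
    (d : lp (fun _ : S => ℂ) p →L[ℂ] lp (fun _ : T => ℂ) p) : Prop :=
  ∃ K : ℝ, ∀ (u : lp (fun _ : S => ℂ) p) (hu : Memℓp (↑u) 2)
    (hdu : Memℓp (↑(d u)) 2), ‖mkL2 _ hdu‖ ≤ K * ‖mkL2 _ hu‖

/-- The image `d(ℓ²(S))` of the `ℓ²` subspace, viewed inside `ℓ²(T)`. -/
def rangeL2 {S T : Type*} {p : ℝ≥0∞} [Fact (1 ≤ p)] (hp : 2 ≤ p)
    (d : lp (fun _ : S => ℂ) p →L[ℂ] lp (fun _ : T => ℂ) p) :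
    Set (lp (fun _ : T => ℂ) 2) :=
  {v | ∃ u : lp (fun _ : S => ℂ) 2, (↑(d (inclL2 hp u)) : T → ℂ) = ↑v}

/-- The image `d(ℓᵖ(S))`, viewed as a set of elements of `ℓ²(T)`. -/
def rangeLpInL2 {S T : Type*} {p : ℝ≥0∞} [Fact (1 ≤ p)]
    (d : lp (fun _ : S => ℂ) p →L[ℂ] lp (fun _ : T => ℂ) p) :
    Set (lp (fun _ : T => ℂ) 2) :=
  {v | ∃ w : lp (fun _ : S => ℂ) p, (↑(d w) : T → ℂ) = ↑v}

/-!
Let `v` lie in the `ℓ²`-closure of `d'₀(ℓ²(J₀))`. Then `g₁ v` lies in the `ℓ²`-closure of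
`d(ℓ²(I₀))`, so `g₁ v = d w` with `w ∈ ℓᵖ(I₀)`, and `d'₁ v = 0`. The homotopy identity at `v` reads
`d'₀ (f₀ w) = v + d'₀ (h₁ v)`, that is `v = d'₀ (f₀ w - h₁ v)`.

Continuity in the `ℓ²` norms is automatic: the inclusion `ℓ² → ℓᵖ` is continuous and injective, so
by the closed graph theorem a bounded operator on `ℓᵖ` that preserves `ℓ²` is bounded on `ℓ²`.
-/

theorem continuous_of_continuous_injective_comp {𝕜 E F X : Type*} [NontriviallyNormedField 𝕜]
    [NormedAddCommGroup E] [NormedSpace 𝕜 E] [CompleteSpace E]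
    [NormedAddCommGroup F] [NormedSpace 𝕜 F] [CompleteSpace F] [TopologicalSpace X] [T2Space X]
    (g : E →ₗ[𝕜] F) {ι : F → X} (hι : Continuous ι) (hι_inj : Function.Injective ι)
    (hιg : Continuous (ι ∘ g)) : Continuous g := by
  have graph_eq : (g.graph : Set (E × F)) = {x | ι x.2 = (ι ∘ g) x.1} := by
    ext x
    exact hι_inj.eq_iff.symm
  refine g.continuous_of_isClosed_graph ?_
  rw [graph_eq]
  exact isClosed_eq (hι.comp continuous_snd) (hιg.comp continuous_fst)

theorem continuous_linearMapOfLE {𝕜 α : Type*} [NontriviallyNormedField 𝕜] {E : α → Type*}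
    [∀ i, NormedAddCommGroup (E i)] [∀ i, NormedSpace 𝕜 (E i)] [∀ i, CompleteSpace (E i)]
    {q r : ℝ≥0∞} [Fact (1 ≤ q)] [Fact (1 ≤ r)] (h : q ≤ r) :
    Continuous (lp.linearMapOfLE 𝕜 E h) := by
  have continuous_coe : Continuous fun u : lp E q => (lp.linearMapOfLE 𝕜 E h u : ∀ i, E i) := by
    simp only [lp.coe_linearMapOfLE_apply]
    exact lp.uniformContinuous_coe.continuous
  exact continuous_of_continuous_injective_comp (lp.linearMapOfLE 𝕜 E h)
    lp.uniformContinuous_coe.continuous (fun _ _ huv => lp.ext huv) continuous_coe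

theorem mem_range_of_homotopy {R A₀ A₁ B₀ B₁ B₂ : Type*} [Ring R]
    [AddCommGroup A₀] [Module R A₀] [AddCommGroup A₁] [Module R A₁]
    [AddCommGroup B₀] [Module R B₀] [AddCommGroup B₁] [Module R B₁]
    [AddCommGroup B₂] [Module R B₂]
    {d : A₀ →ₗ[R] A₁} {d'₀ : B₀ →ₗ[R] B₁} {d'₁ : B₁ →ₗ[R] B₂}
    {f₀ : A₀ →ₗ[R] B₀} {f₁ : A₁ →ₗ[R] B₁} {g₁ : B₁ →ₗ[R] A₁}
    {h₁ : B₁ →ₗ[R] B₀} {h₂ : B₂ →ₗ[R] B₁}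
    (h_comm_f : ∀ a, f₁ (d a) = d'₀ (f₀ a))
    (h_homotopy : ∀ b, f₁ (g₁ b) = b + d'₀ (h₁ b) + h₂ (d'₁ b))
    {b : B₁} (hb : d'₁ b = 0) (hgb : g₁ b ∈ Set.range d) : b ∈ Set.range d'₀ := by
  obtain ⟨a, ha⟩ := hgb
  have h_eq : d'₀ (f₀ a) = b + d'₀ (h₁ b) := by
    rw [← h_comm_f, ha, h_homotopy, hb, map_zero, add_zero]
  exact ⟨f₀ a - h₁ b, by rw [map_sub, h_eq, add_sub_cancel_right]⟩

section L2

variable {S T S' T' : Type*} {p : ℝ≥0∞}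

theorem coe_inclL2 (hp : 2 ≤ p) (u : lp (fun _ : S => ℂ) 2) : (inclL2 hp u : S → ℂ) = u :=
  lp.coe_linearMapOfLE_apply (𝕜 := ℂ) hp u

theorem coe_mkL2 {f : S → ℂ} (hf : Memℓp f 2) : (mkL2 f hf : S → ℂ) = f :=
  rfl

theorem eq_inclL2_iff (hp : 2 ≤ p) {w : lp (fun _ : S => ℂ) p} {v : lp (fun _ : S => ℂ) 2} :
    w = inclL2 hp v ↔ (w : S → ℂ) = v := by
  rw [lp.ext_iff, coe_inclL2]

theorem inclL2_add (hp : 2 ≤ p) (u v : lp (fun _ : S => ℂ) 2) :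
    inclL2 hp (u + v) = inclL2 hp u + inclL2 hp v :=
  map_add (lp.linearMapOfLE ℂ (fun _ : S => ℂ) hp) u v

theorem inclL2_smul (hp : 2 ≤ p) (c : ℂ) (u : lp (fun _ : S => ℂ) 2) :
    inclL2 hp (c • u) = c • inclL2 hp u :=
  map_smul (lp.linearMapOfLE ℂ (fun _ : S => ℂ) hp) c u

theorem memℓp_inclL2 (hp : 2 ≤ p) (u : lp (fun _ : S => ℂ) 2) : Memℓp (inclL2 hp u) 2 := by
  rw [coe_inclL2]
  exact lp.memℓp u

theorem inclL2_injective (hp : 2 ≤ p) :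
    Function.Injective (inclL2 hp : lp (fun _ : S => ℂ) 2 → lp (fun _ : S => ℂ) p) := by
  intro u v h
  rw [eq_inclL2_iff, coe_inclL2] at h
  exact lp.ext h

theorem inclL2_mkL2 (hp : 2 ≤ p) {w : lp (fun _ : S => ℂ) p} (hw : Memℓp w 2) :
    inclL2 hp (mkL2 w hw) = w :=
  ((eq_inclL2_iff hp).2 (coe_mkL2 hw).symm).symm

variable [Fact (1 ≤ p)]

theorem continuous_inclL2 (hp : 2 ≤ p) :
    Continuous (inclL2 hp : lp (fun _ : S => ℂ) 2 → lp (fun _ : S => ℂ) p) :=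
  continuous_linearMapOfLE (𝕜 := ℂ) hp

theorem mem_rangeL2_iff (hp : 2 ≤ p) {d : lp (fun _ : S => ℂ) p →L[ℂ] lp (fun _ : T => ℂ) p}
    {v : lp (fun _ : T => ℂ) 2} :
    v ∈ rangeL2 hp d ↔ ∃ u, d (inclL2 hp u) = inclL2 hp v :=
  exists_congr fun _ => (eq_inclL2_iff hp).symm

theorem mem_rangeLpInL2_iff (hp : 2 ≤ p) {d : lp (fun _ : S => ℂ) p →L[ℂ] lp (fun _ : T => ℂ) p}
    {v : lp (fun _ : T => ℂ) 2} :
    v ∈ rangeLpInL2 d ↔ inclL2 hp v ∈ Set.range d :=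
  exists_congr fun _ => (eq_inclL2_iff hp).symm

/-- The linear map `ℓ²(S) → ℓ²(T)` induced by an operator on `ℓᵖ` that preserves `ℓ²`. It is not
bundled as a continuous map, its continuity being a theorem: `MapsL2.continuous_restrict`. -/
def MapsL2.restrict (hp : 2 ≤ p) {d : lp (fun _ : S => ℂ) p →L[ℂ] lp (fun _ : T => ℂ) p}
    (hd : MapsL2 d) : lp (fun _ : S => ℂ) 2 →ₗ[ℂ] lp (fun _ : T => ℂ) 2 where
  toFun u := mkL2 _ (hd (inclL2 hp u) (memℓp_inclL2 hp u))
  map_add' u v := inclL2_injective hp (by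
    rw [inclL2_mkL2, inclL2_add, map_add, inclL2_add, inclL2_mkL2, inclL2_mkL2])
  map_smul' c u := inclL2_injective hp (by
    rw [inclL2_mkL2, inclL2_smul, map_smul, RingHom.id_apply, inclL2_smul, inclL2_mkL2])

theorem MapsL2.inclL2_restrict (hp : 2 ≤ p)
    {d : lp (fun _ : S => ℂ) p →L[ℂ] lp (fun _ : T => ℂ) p} (hd : MapsL2 d)
    (u : lp (fun _ : S => ℂ) 2) : inclL2 hp (hd.restrict hp u) = d (inclL2 hp u) :=
  inclL2_mkL2 hp _

theorem MapsL2.continuous_restrict (hp : 2 ≤ p)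
    {d : lp (fun _ : S => ℂ) p →L[ℂ] lp (fun _ : T => ℂ) p} (hd : MapsL2 d) :
    Continuous (hd.restrict hp) :=
  continuous_of_continuous_injective_comp (hd.restrict hp) (continuous_inclL2 hp)
    (inclL2_injective hp) (by
      simpa only [Function.comp_def, hd.inclL2_restrict hp]
        using d.continuous.comp (continuous_inclL2 hp))

theorem MapsL2.mapsTo_closure_rangeL2 (hp : 2 ≤ p)
    {d : lp (fun _ : S => ℂ) p →L[ℂ] lp (fun _ : T => ℂ) p}
    {d' : lp (fun _ : S' => ℂ) p →L[ℂ] lp (fun _ : T' => ℂ) p}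
    {g₀ : lp (fun _ : S => ℂ) p →L[ℂ] lp (fun _ : S' => ℂ) p}
    {g₁ : lp (fun _ : T => ℂ) p →L[ℂ] lp (fun _ : T' => ℂ) p}
    (hg₀ : MapsL2 g₀) (hg₁ : MapsL2 g₁) (h_comm : ∀ u, g₁ (d u) = d' (g₀ u)) :
    Set.MapsTo (hg₁.restrict hp) (closure (rangeL2 hp d)) (closure (rangeL2 hp d')) := by
  refine Set.MapsTo.closure (fun v hv => ?_) (hg₁.continuous_restrict hp)
  obtain ⟨u, hu⟩ := (mem_rangeL2_iff hp).1 hv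
  refine (mem_rangeL2_iff hp).2 ⟨hg₀.restrict hp u, ?_⟩
  rw [inclL2_restrict, inclL2_restrict, ← hu, h_comm]

theorem map_inclL2_eq_zero_of_mem_closure_rangeL2 {W : Type*} [TopologicalSpace W] [T1Space W]
    [Zero W] (hp : 2 ≤ p) {d : lp (fun _ : S => ℂ) p →L[ℂ] lp (fun _ : T => ℂ) p}
    {e : lp (fun _ : T => ℂ) p → W} (he : Continuous e) (h_complex : ∀ u, e (d u) = 0)
    {v : lp (fun _ : T => ℂ) 2} (hv : v ∈ closure (rangeL2 hp d)) : e (inclL2 hp v) = 0 := by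
  have h_closed : IsClosed {x | e (inclL2 hp x) = 0} :=
    isClosed_singleton.preimage (he.comp (continuous_inclL2 hp))
  refine closure_minimal (fun x hx => ?_) h_closed hv
  obtain ⟨u, hu⟩ := (mem_rangeL2_iff hp).1 hx
  rw [Set.mem_ofPred_eq, ← hu, h_complex]

end L2

theorem stmt_16_general {p : ℝ≥0∞} [Fact (1 ≤ p)] (hp2 : 2 ≤ p)
    {I₀ I₁ J₀ J₁ J₂ : Type*}
    (d : lp (fun _ : I₀ => ℂ) p →L[ℂ] lp (fun _ : I₁ => ℂ) p)
    (d'₀ : lp (fun _ : J₀ => ℂ) p →L[ℂ] lp (fun _ : J₁ => ℂ) p)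
    (d'₁ : lp (fun _ : J₁ => ℂ) p →L[ℂ] lp (fun _ : J₂ => ℂ) p)
    (f₀ : lp (fun _ : I₀ => ℂ) p →ₗ[ℂ] lp (fun _ : J₀ => ℂ) p)
    (f₁ : lp (fun _ : I₁ => ℂ) p →ₗ[ℂ] lp (fun _ : J₁ => ℂ) p)
    (g₀ : lp (fun _ : J₀ => ℂ) p →L[ℂ] lp (fun _ : I₀ => ℂ) p)
    (g₁ : lp (fun _ : J₁ => ℂ) p →L[ℂ] lp (fun _ : I₁ => ℂ) p)
    (h₁ : lp (fun _ : J₁ => ℂ) p →ₗ[ℂ] lp (fun _ : J₀ => ℂ) p)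
    (h₂ : lp (fun _ : J₂ => ℂ) p →ₗ[ℂ] lp (fun _ : J₁ => ℂ) p)
    (hg₀_l2 : MapsL2 g₀) (hg₁_l2 : MapsL2 g₁)
    (h_complex : ∀ u, d'₁ (d'₀ u) = 0)
    (h_comm_f : ∀ u, f₁ (d u) = d'₀ (f₀ u))
    (h_comm_g : ∀ u, g₁ (d'₀ u) = d (g₀ u))
    (h_homotopy : ∀ u, f₁ (g₁ u) = u + d'₀ (h₁ u) + h₂ (d'₁ u))
    (h_X : closure (rangeL2 hp2 d) ⊆ rangeLpInL2 d) :
    closure (rangeL2 hp2 d'₀) ⊆ rangeLpInL2 d'₀ := by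
  intro v hv
  have hd'₁v : d'₁ (inclL2 hp2 v) = 0 :=
    map_inclL2_eq_zero_of_mem_closure_rangeL2 hp2 d'₁.continuous h_complex hv
  have hg₁v : hg₁_l2.restrict hp2 v ∈ closure (rangeL2 hp2 d) :=
    hg₀_l2.mapsTo_closure_rangeL2 hp2 hg₁_l2 h_comm_g hv
  have hg₁v_range : g₁ (inclL2 hp2 v) ∈ Set.range d := by
    rw [← hg₁_l2.inclL2_restrict hp2, ← mem_rangeLpInL2_iff hp2]
    exact h_X hg₁v
  exact (mem_rangeLpInL2_iff hp2).2 (mem_range_of_homotopy (d := d.toLinearMap)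
    (d'₀ := d'₀.toLinearMap) (d'₁ := d'₁.toLinearMap) (g₁ := g₁.toLinearMap)
    h_comm_f h_homotopy hd'₁v hg₁v_range)

/-- Proposition 5.3 of the paper: invariance of the torsion
inclusion (9) under bounded `ℓ²`/`ℓᵖ` homotopies. Given chain maps `f`, `g`
between two complexes, bounded both in `ℓᵖ` and in `ℓ²` norms, commuting with
the coboundaries, and a bounded homotopy `f₁ ∘ g₁ = Id + d'₀ ∘ h₁ + h₂ ∘ d'₁`,
if `closure_{ℓ²}(d(ℓ²(I₀))) ⊆ d(ℓᵖ(I₀))`, then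
`closure_{ℓ²}(d'₀(ℓ²(J₀))) ⊆ d'₀(ℓᵖ(J₀))`. -/
theorem stmt_16 {p : ℝ≥0∞} [Fact (1 ≤ p)] (hp2 : 2 ≤ p) (hp_ne_top : p ≠ ⊤)
    {I₀ I₁ J₀ J₁ J₂ : Type*}
    (d : lp (fun _ : I₀ => ℂ) p →L[ℂ] lp (fun _ : I₁ => ℂ) p)
    (d'₀ : lp (fun _ : J₀ => ℂ) p →L[ℂ] lp (fun _ : J₁ => ℂ) p)
    (d'₁ : lp (fun _ : J₁ => ℂ) p →L[ℂ] lp (fun _ : J₂ => ℂ) p)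
    (f₀ : lp (fun _ : I₀ => ℂ) p →L[ℂ] lp (fun _ : J₀ => ℂ) p)
    (f₁ : lp (fun _ : I₁ => ℂ) p →L[ℂ] lp (fun _ : J₁ => ℂ) p)
    (g₀ : lp (fun _ : J₀ => ℂ) p →L[ℂ] lp (fun _ : I₀ => ℂ) p)
    (g₁ : lp (fun _ : J₁ => ℂ) p →L[ℂ] lp (fun _ : I₁ => ℂ) p)
    (h₁ : lp (fun _ : J₁ => ℂ) p →L[ℂ] lp (fun _ : J₀ => ℂ) p)
    (h₂ : lp (fun _ : J₂ => ℂ) p →L[ℂ] lp (fun _ : J₁ => ℂ) p)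
    (hd_l2 : MapsL2 d) (hd_bdd : BddL2 d)
    (hd'₀_l2 : MapsL2 d'₀) (hd'₀_bdd : BddL2 d'₀)
    (hd'₁_l2 : MapsL2 d'₁) (hd'₁_bdd : BddL2 d'₁)
    (hf₀_l2 : MapsL2 f₀) (hf₀_bdd : BddL2 f₀)
    (hf₁_l2 : MapsL2 f₁) (hf₁_bdd : BddL2 f₁)
    (hg₀_l2 : MapsL2 g₀) (hg₀_bdd : BddL2 g₀)
    (hg₁_l2 : MapsL2 g₁) (hg₁_bdd : BddL2 g₁)
    (hh₁_l2 : MapsL2 h₁) (hh₁_bdd : BddL2 h₁)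
    (hh₂_l2 : MapsL2 h₂) (hh₂_bdd : BddL2 h₂)
    (h_complex : ∀ u, d'₁ (d'₀ u) = 0)
    (h_comm_f : ∀ u, f₁ (d u) = d'₀ (f₀ u))
    (h_comm_g : ∀ u, g₁ (d'₀ u) = d (g₀ u))
    (h_homotopy : ∀ u, f₁ (g₁ u) = u + d'₀ (h₁ u) + h₂ (d'₁ u))
    (h_X : closure (rangeL2 hp2 d) ⊆ rangeLpInL2 d) :
    closure (rangeL2 hp2 d'₀) ⊆ rangeLpInL2 d'₀ :=
  stmt_16_general hp2 d d'₀ d'₁ f₀.toLinearMap f₁.toLinearMap g₀ g₁ h₁.toLinearMap h₂.toLinearMap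
    hg₀_l2 hg₁_l2 h_complex h_comm_f h_comm_g h_homotopy h_X
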